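/- arXiv:1704.00749 — 2 statements merged into one kernel-verified Lean document; each statement's English description precedes it below -/
import Mathlib

section
/- Assume strict feasibility of the primal problem. Define Z(ε) = { z ∈ ℝ₊^{4N} : V(z) ≤ ε } and F(ε) = inf{ D(z) : z ∈ Z(ε) }. Then there exists κ > 0 such that for every ε with 0 < ε ≤ κ, the set Z(ε) is bounded and F(ε) > −∞. -/
open Matrix

noncomputable section

/-- Euclidean norm of a vector in ℝ^{4N}, represented as four blocks of ℝ^N. -/
def enorm4 {N : ℕ} (w : Fin 4 → Fin N → ℝ) : ℝ :=
  Real.sqrt (∑ b, ∑ i, w b i ^ 2)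

/-- sign(x) = 1 if x ≥ 0 and −1 if x < 0. -/
def sgn (x : ℝ) : ℝ := if 0 ≤ x then 1 else -1

/-- The (linearized) voltage map v(q) = A q + d. -/
def volt {N : ℕ} (A : Matrix (Fin N) (Fin N) ℝ) (d : Fin N → ℝ) (q : Fin N → ℝ) :
    Fin N → ℝ :=
  A *ᵥ q + d

/-- q(z) = λ^min − λ^max + A⁻¹(μ^min − μ^max). -/
def qOf {N : ℕ} (A : Matrix (Fin N) (Fin N) ℝ) (z : Fin 4 → Fin N → ℝ) : Fin N → ℝ :=
  z 0 - z 1 + A⁻¹ *ᵥ (z 2 - z 3)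

/-- ∇D(z) = (v^min − v(q(z)), v(q(z)) − v^max, q^min − q(z), q(z) − q^max). -/
def gradD {N : ℕ} (A : Matrix (Fin N) (Fin N) ℝ) (d vmin vmax qmin qmax : Fin N → ℝ)
    (z : Fin 4 → Fin N → ℝ) : Fin 4 → Fin N → ℝ :=
  ![vmin - volt A d (qOf A z), volt A d (qOf A z) - vmax,
    qmin - qOf A z, qOf A z - qmax]

/-- V(z) = ‖z − ⌈z + ∇D(z)⌉₊‖. -/
def Vfun {N : ℕ} (A : Matrix (Fin N) (Fin N) ℝ) (d vmin vmax qmin qmax : Fin N → ℝ)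
    (z : Fin 4 → Fin N → ℝ) : ℝ :=
  enorm4 (fun b i => z b i - max (z b i + gradD A d vmin vmax qmin qmax z b i) 0)

/-- The Lagrangian dual function
D(z) = inf_q [ (1/2) qᵀAq + (λ^min)ᵀ(v^min − v(q)) + (λ^max)ᵀ(v(q) − v^max)
  + (μ^min)ᵀ(q^min − q) + (μ^max)ᵀ(q − q^max) ]. -/
def dualFun {N : ℕ} (A : Matrix (Fin N) (Fin N) ℝ) (d vmin vmax qmin qmax : Fin N → ℝ)
    (z : Fin 4 → Fin N → ℝ) : ℝ :=
  ⨅ q : Fin N → ℝ,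
    ((1 / 2) * (q ⬝ᵥ A *ᵥ q) + (z 0) ⬝ᵥ (vmin - volt A d q)
      + (z 1) ⬝ᵥ (volt A d q - vmax) + (z 2) ⬝ᵥ (qmin - q) + (z 3) ⬝ᵥ (q - qmax))

/-- fes(q) = Euclidean distance from (q, v(q)) to the box [q^min,q^max] × [v^min,v^max]. -/
def fes {N : ℕ} (A : Matrix (Fin N) (Fin N) ℝ) (d vmin vmax qmin qmax : Fin N → ℝ)
    (q : Fin N → ℝ) : ℝ :=
  sInf { r : ℝ | ∃ y1 y2 : Fin N → ℝ,
    (∀ i, qmin i ≤ y1 i ∧ y1 i ≤ qmax i) ∧ (∀ i, vmin i ≤ y2 i ∧ y2 i ≤ vmax i) ∧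
    r = Real.sqrt ((∑ i, (q i - y1 i) ^ 2) + ∑ i, (volt A d q i - y2 i) ^ 2) }

/-- The constraint values c(q) = (v^min − v(q), v(q) − v^max, q^min − q, q − q^max). -/
def constr {N : ℕ} (A : Matrix (Fin N) (Fin N) ℝ) (d vmin vmax qmin qmax : Fin N → ℝ)
    (q : Fin N → ℝ) : Fin 4 → Fin N → ℝ :=
  ![vmin - volt A d q, volt A d q - vmax, qmin - q, q - qmax]

/-- The Lagrangian of the primal problem. -/
def lagr {N : ℕ} (A : Matrix (Fin N) (Fin N) ℝ) (d vmin vmax qmin qmax : Fin N → ℝ)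
    (z : Fin 4 → Fin N → ℝ) (q : Fin N → ℝ) : ℝ :=
  (1 / 2) * (q ⬝ᵥ A *ᵥ q) + (z 0) ⬝ᵥ (vmin - volt A d q)
      + (z 1) ⬝ᵥ (volt A d q - vmax) + (z 2) ⬝ᵥ (qmin - q) + (z 3) ⬝ᵥ (q - qmax)

lemma continuous_constr {N : ℕ} (A : Matrix (Fin N) (Fin N) ℝ)
    (d vmin vmax qmin qmax : Fin N → ℝ) :
    Continuous (constr A d vmin vmax qmin qmax) := by
  refine continuous_pi fun b => ?_
  fin_cases b <;> simp [constr, volt] <;> fun_prop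

lemma mulVec_qOf {N : ℕ} {A : Matrix (Fin N) (Fin N) ℝ} (hA : A.PosDef)
    (z : Fin 4 → Fin N → ℝ) :
    A *ᵥ qOf A z = A *ᵥ (z 0 - z 1) + (z 2 - z 3) := by
  have hdet : IsUnit A.det := (Matrix.isUnit_iff_isUnit_det A).1 hA.isUnit
  rw [qOf, Matrix.mulVec_add, Matrix.mulVec_mulVec, Matrix.mul_nonsing_inv A hdet,
    Matrix.one_mulVec]

lemma dotProduct_mulVec_comm {N : ℕ} {A : Matrix (Fin N) (Fin N) ℝ} (hA : A.PosDef)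
    (x y : Fin N → ℝ) : x ⬝ᵥ A *ᵥ y = A *ᵥ x ⬝ᵥ y := by
  have hT : Aᵀ = A := by simpa using hA.isHermitian.eq
  rw [Matrix.dotProduct_mulVec, ← Matrix.mulVec_transpose, hT]

lemma sum_mul_constr {N : ℕ} (A : Matrix (Fin N) (Fin N) ℝ)
    (d vmin vmax qmin qmax : Fin N → ℝ) (z : Fin 4 → Fin N → ℝ) (q : Fin N → ℝ) :
    ∑ b, ∑ i, z b i * constr A d vmin vmax qmin qmax q b i =
      (z 0) ⬝ᵥ (vmin - volt A d q) + (z 1) ⬝ᵥ (volt A d q - vmax)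
        + (z 2) ⬝ᵥ (qmin - q) + (z 3) ⬝ᵥ (q - qmax) := by
  rw [Fin.sum_univ_four]
  rfl

/-- The constraint map is affine, and its linear part pairs with `z` to `-A q(z)`. -/
lemma sum_mul_constr_sub {N : ℕ} {A : Matrix (Fin N) (Fin N) ℝ} (hA : A.PosDef)
    (d vmin vmax qmin qmax : Fin N → ℝ) (z : Fin 4 → Fin N → ℝ) (p q : Fin N → ℝ) :
    ∑ b, ∑ i, z b i * constr A d vmin vmax qmin qmax p b i =
      ∑ b, ∑ i, z b i * constr A d vmin vmax qmin qmax q b i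
        - A *ᵥ qOf A z ⬝ᵥ (p - q) := by
  rw [sum_mul_constr, sum_mul_constr, mulVec_qOf hA]
  simp only [volt, dotProduct_sub, dotProduct_add, add_dotProduct, sub_dotProduct,
    Matrix.mulVec_sub, dotProduct_mulVec_comm hA]
  ring

lemma lagr_qOf_le {N : ℕ} {A : Matrix (Fin N) (Fin N) ℝ} (hA : A.PosDef)
    (d vmin vmax qmin qmax : Fin N → ℝ) (z : Fin 4 → Fin N → ℝ) (q : Fin N → ℝ) :
    lagr A d vmin vmax qmin qmax z (qOf A z) ≤ lagr A d vmin vmax qmin qmax z q := by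
  have h := sum_mul_constr_sub hA d vmin vmax qmin qmax z q (qOf A z)
  rw [sum_mul_constr, sum_mul_constr] at h
  have hpos : 0 ≤ (q - qOf A z) ⬝ᵥ A *ᵥ (q - qOf A z) := by
    simpa using hA.posSemidef.dotProduct_mulVec_nonneg (q - qOf A z)
  have hc : q ⬝ᵥ A *ᵥ qOf A z = A *ᵥ qOf A z ⬝ᵥ q := dotProduct_comm _ _
  simp only [Matrix.mulVec_sub, dotProduct_sub, sub_dotProduct] at hpos h
  rw [dotProduct_mulVec_comm hA (qOf A z) q, dotProduct_mulVec_comm hA (qOf A z) (qOf A z),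
    hc] at hpos
  simp only [lagr, dotProduct_sub]
  rw [dotProduct_mulVec_comm hA (qOf A z) (qOf A z)]
  linarith

lemma continuous_lagr_qOf {N : ℕ} (A : Matrix (Fin N) (Fin N) ℝ)
    (d vmin vmax qmin qmax : Fin N → ℝ) :
    Continuous fun z => lagr A d vmin vmax qmin qmax z (qOf A z) := by
  unfold lagr qOf volt
  fun_prop

lemma bddBelow_dualFun_image {N : ℕ} {A : Matrix (Fin N) (Fin N) ℝ} (hA : A.PosDef)
    (d vmin vmax qmin qmax : Fin N → ℝ) {S : Set (Fin 4 → Fin N → ℝ)}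
    (hS : Bornology.IsBounded S) :
    BddBelow (dualFun A d vmin vmax qmin qmax '' S) := by
  obtain ⟨m, hm⟩ := (hS.isCompact_closure.image
    (continuous_lagr_qOf A d vmin vmax qmin qmax)).bddBelow
  refine ⟨m, ?_⟩
  rintro _ ⟨z, hz, rfl⟩
  exact (hm ⟨z, subset_closure hz, rfl⟩).trans
    (le_ciInf fun q => lagr_qOf_le hA d vmin vmax qmin qmax z q)

lemma abs_le_enorm4 {N : ℕ} (w : Fin 4 → Fin N → ℝ) (b : Fin 4) (i : Fin N) :
    |w b i| ≤ enorm4 w := by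
  refine Real.abs_le_sqrt ?_
  calc w b i ^ 2 ≤ ∑ j, w b j ^ 2 :=
        Finset.single_le_sum (f := fun j => w b j ^ 2) (fun j _ => sq_nonneg _)
          (Finset.mem_univ i)
    _ ≤ ∑ a, ∑ j, w a j ^ 2 :=
        Finset.single_le_sum (f := fun a => ∑ j, w a j ^ 2)
          (fun a _ => Finset.sum_nonneg fun j _ => sq_nonneg _) (Finset.mem_univ b)

/-- A small projection residual forces `g ≤ ε` and approximate complementarity. -/
lemma le_and_of_abs_sub_max_le {x g ε : ℝ} (h : |x - max (x + g) 0| ≤ ε) :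
    g ≤ ε ∧ (x ≤ ε ∨ -ε ≤ g) := by
  rcases abs_le.1 h with ⟨h1, h2⟩
  rcases le_total (x + g) 0 with h0 | h0
  · rw [max_eq_right h0] at h1 h2
    exact ⟨by linarith, Or.inl (by linarith)⟩
  · rw [max_eq_left h0] at h1 h2
    exact ⟨by linarith, Or.inr (by linarith)⟩

/-- Approximate complementarity bounds `x * g` from below. -/
lemma neg_mul_add_le_mul {x g ε M : ℝ} (hx : 0 ≤ x) (hε : 0 ≤ ε) (hM : 0 ≤ M)
    (hg : -M ≤ g) (h : x ≤ ε ∨ -ε ≤ g) : -(ε * M + ε * x) ≤ x * g := by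
  have hεx := mul_nonneg hε hx
  have hεM := mul_nonneg hε hM
  rcases h with h | h
  · have := mul_le_mul_of_nonneg_left hg hx
    have := mul_le_mul_of_nonneg_right h hM
    linarith
  · have := mul_le_mul_of_nonneg_left h hx
    linarith

lemma exists_constr_le_neg {N : ℕ} (hN : 0 < N) {A : Matrix (Fin N) (Fin N) ℝ}
    {d vmin vmax qmin qmax q : Fin N → ℝ} (hq : ∀ i, qmin i < q i ∧ q i < qmax i)
    (hv : ∀ i, vmin i < volt A d q i ∧ volt A d q i < vmax i) :
    ∃ δ > 0, ∀ b i, constr A d vmin vmax qmin qmax q b i ≤ -δ := by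
  have : Nonempty (Fin N) := ⟨⟨0, hN⟩⟩
  obtain ⟨p, hp⟩ := Finite.exists_max fun p : Fin 4 × Fin N =>
    constr A d vmin vmax qmin qmax q p.1 p.2
  have hneg : ∀ b i, constr A d vmin vmax qmin qmax q b i < 0 := by
    intro b i
    fin_cases b <;> simp [constr, hq i, hv i]
  exact ⟨-constr A d vmin vmax qmin qmax q p.1 p.2, neg_pos.2 (hneg _ _),
    fun b i => by simpa using hp (b, i)⟩

lemma isBounded_of_sum_le {N : ℕ} {S : Set (Fin 4 → Fin N → ℝ)} {R : ℝ}
    (h0 : ∀ z ∈ S, ∀ b i, 0 ≤ z b i) (hR : ∀ z ∈ S, ∑ b, ∑ i, z b i ≤ R) :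
    Bornology.IsBounded S := by
  refine (Metric.isBounded_Icc (0 : Fin 4 → Fin N → ℝ) fun _ _ => R).subset ?_
  refine fun z hz => ⟨fun b i => h0 z hz b i, fun b i => le_trans ?_ (hR z hz)⟩
  calc z b i ≤ ∑ j, z b j :=
        Finset.single_le_sum (f := fun j => z b j) (fun j _ => h0 z hz b j)
          (Finset.mem_univ i)
    _ ≤ ∑ a, ∑ j, z a j :=
        Finset.single_le_sum (f := fun a => ∑ j, z a j)
          (fun a _ => Finset.sum_nonneg fun j _ => h0 z hz a j) (Finset.mem_univ b)

/-- Proposition 4(a): under strict feasibility there is κ > 0 such that for all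
0 < ε ≤ κ the set Z(ε) = {z ∈ ℝ₊^{4N} : V(z) ≤ ε} is bounded and
F(ε) = inf{D(z) : z ∈ Z(ε)} > −∞ (i.e. {D(z) : z ∈ Z(ε)} is bounded below). -/
theorem stmt_13 (N : ℕ) (hN : 0 < N) (A : Matrix (Fin N) (Fin N) ℝ) (hA : A.PosDef)
    (d vmin vmax qmin qmax : Fin N → ℝ)
    (hv : ∀ i, vmin i ≤ vmax i) (hq : ∀ i, qmin i ≤ qmax i)
    (hstrict : ∃ q : Fin N → ℝ, (∀ i, qmin i < q i ∧ q i < qmax i) ∧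
      ∀ i, vmin i < volt A d q i ∧ volt A d q i < vmax i) :
    ∃ κ : ℝ, 0 < κ ∧ ∀ ε : ℝ, 0 < ε → ε ≤ κ →
      Bornology.IsBounded
        {z : Fin 4 → Fin N → ℝ | (∀ b i, 0 ≤ z b i) ∧
          Vfun A d vmin vmax qmin qmax z ≤ ε} ∧
      BddBelow (dualFun A d vmin vmax qmin qmax ''
        {z : Fin 4 → Fin N → ℝ | (∀ b i, 0 ≤ z b i) ∧
          Vfun A d vmin vmax qmin qmax z ≤ ε}) := by
  obtain ⟨qs, hqs, hvs⟩ := hstrict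
  obtain ⟨δ, hδ, hslack⟩ := exists_constr_le_neg hN hqs hvs
  refine ⟨δ / 2, half_pos hδ, fun ε hε hεδ => ?_⟩
  suffices hb : Bornology.IsBounded {z : Fin 4 → Fin N → ℝ | (∀ b i, 0 ≤ z b i) ∧
      Vfun A d vmin vmax qmin qmax z ≤ ε} from
    ⟨hb, bddBelow_dualFun_image hA d vmin vmax qmin qmax hb⟩
  have hbox : IsCompact (Set.Icc (fun i => qmin i - ε) fun i => qmax i + ε) := isCompact_Icc
  obtain ⟨M, hM⟩ := (hbox.image
    (continuous_constr A d vmin vmax qmin qmax)).isBounded.exists_norm_le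
  obtain ⟨C, hC⟩ := (hbox.image (f := fun q => -(A *ᵥ q ⬝ᵥ (q - qs)))
    (by fun_prop)).bddAbove
  refine isBounded_of_sum_le
    (R := (2 / δ) * (C + ∑ _b : Fin 4, ∑ _i : Fin N, ε * M)) (fun z hz => hz.1) ?_
  rintro z ⟨hz, hV⟩
  have hres : ∀ b i, constr A d vmin vmax qmin qmax (qOf A z) b i ≤ ε ∧
      (z b i ≤ ε ∨ -ε ≤ constr A d vmin vmax qmin qmax (qOf A z) b i) := fun b i =>
    le_and_of_abs_sub_max_le ((abs_le_enorm4 _ b i).trans hV)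
  have hmem : qOf A z ∈ Set.Icc (fun i => qmin i - ε) fun i => qmax i + ε := by
    refine ⟨fun i => ?_, fun i => ?_⟩
    · have : qmin i - qOf A z i ≤ ε := (hres 2 i).1
      linarith
    · have : qOf A z i - qmax i ≤ ε := (hres 3 i).1
      linarith
  have hMz := hM _ ⟨_, hmem, rfl⟩
  have hCz := hC ⟨_, hmem, rfl⟩
  have hlow : ∑ b, ∑ i, -(ε * M + ε * z b i) ≤
      ∑ b, ∑ i, z b i * constr A d vmin vmax qmin qmax (qOf A z) b i := by
    refine Finset.sum_le_sum fun b _ => Finset.sum_le_sum fun i _ => ?_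
    have hg := ((norm_le_pi_norm (constr A d vmin vmax qmin qmax (qOf A z) b) i).trans
      (norm_le_pi_norm (constr A d vmin vmax qmin qmax (qOf A z)) b)).trans hMz
    exact neg_mul_add_le_mul (hz b i) hε.le ((norm_nonneg _).trans hMz)
      (abs_le.1 hg).1 (hres b i).2
  have hup : ∑ b, ∑ i, z b i * constr A d vmin vmax qmin qmax qs b i ≤
      ∑ b, ∑ i, z b i * -δ :=
    Finset.sum_le_sum fun b _ => Finset.sum_le_sum fun i _ =>
      mul_le_mul_of_nonneg_left (hslack b i) (hz b i)
  rw [sum_mul_constr_sub hA d vmin vmax qmin qmax z (qOf A z) qs] at hlow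
  simp only [Finset.sum_neg_distrib, Finset.sum_add_distrib, ← Finset.mul_sum,
    ← Finset.sum_mul] at hlow hup ⊢
  have hsum : 0 ≤ ∑ b, ∑ i, z b i :=
    Finset.sum_nonneg fun b _ => Finset.sum_nonneg fun i _ => hz b i
  have hsmall := mul_le_mul_of_nonneg_right hεδ hsum
  rw [div_mul_eq_mul_div, le_div_iff₀ hδ]
  linarith

end
end

section
/- Assume strict feasibility of the primal problem, so that the set Z* of maximizers of D over ℝ₊^{4N} is nonempty and bounded, and let D* = sup{D(z) : z ∈ ℝ₊^{4N}}. Then for every ε > 0 there exists η > 0 such that every z ∈ ℝ₊^{4N} with D* − D(z) ≤ η satisfies dist(z, Z*) ≤ ε. -/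
open Matrix

noncomputable section

/-- The Lagrangian whose infimum over `q` is the dual function. -/
def lagrangian {N : ℕ} (A : Matrix (Fin N) (Fin N) ℝ) (d vmin vmax qmin qmax : Fin N → ℝ)
    (z : Fin 4 → Fin N → ℝ) (q : Fin N → ℝ) : ℝ :=
  (1 / 2) * (q ⬝ᵥ A *ᵥ q) + (z 0) ⬝ᵥ (vmin - volt A d q)
    + (z 1) ⬝ᵥ (volt A d q - vmax) + (z 2) ⬝ᵥ (qmin - q) + (z 3) ⬝ᵥ (q - qmax)

theorem lagrangian_eq_add_sq {N : ℕ} {A : Matrix (Fin N) (Fin N) ℝ} (hA : A.PosDef)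
    (d vmin vmax qmin qmax : Fin N → ℝ) (z : Fin 4 → Fin N → ℝ) (r : Fin N → ℝ) :
    lagrangian A d vmin vmax qmin qmax z (qOf A z + r) =
      lagrangian A d vmin vmax qmin qmax z (qOf A z) + (1 / 2) * (r ⬝ᵥ A *ᵥ r) := by
  have hdet : IsUnit A.det := (Matrix.isUnit_iff_isUnit_det A).1 hA.isUnit
  have hT : Aᵀ = A := by simpa [Matrix.IsHermitian] using hA.isHermitian
  have hsymm : ∀ x y : Fin N → ℝ, x ⬝ᵥ A *ᵥ y = y ⬝ᵥ A *ᵥ x := fun x y => by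
    rw [dotProduct_mulVec, ← mulVec_transpose, hT, dotProduct_comm]
  have hAq : A *ᵥ qOf A z = A *ᵥ (z 0 - z 1) + (z 2 - z 3) := by
    rw [qOf, mulVec_add, mulVec_mulVec, mul_nonsing_inv A hdet, one_mulVec]
  have hcross : r ⬝ᵥ A *ᵥ qOf A z =
      z 0 ⬝ᵥ A *ᵥ r - z 1 ⬝ᵥ A *ᵥ r + (z 2 ⬝ᵥ r - z 3 ⬝ᵥ r) := by
    rw [hAq, dotProduct_add, hsymm r, sub_dotProduct, dotProduct_sub,
      dotProduct_comm r, dotProduct_comm r]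
  have hcross' := hsymm (qOf A z) r
  simp only [lagrangian, volt, mulVec_add, dotProduct_add, add_dotProduct, dotProduct_sub]
  linarith

theorem lagrangian_qOf_le {N : ℕ} {A : Matrix (Fin N) (Fin N) ℝ} (hA : A.PosDef)
    (d vmin vmax qmin qmax : Fin N → ℝ) (z : Fin 4 → Fin N → ℝ) (q : Fin N → ℝ) :
    lagrangian A d vmin vmax qmin qmax z (qOf A z) ≤ lagrangian A d vmin vmax qmin qmax z q := by
  have h := lagrangian_eq_add_sq hA d vmin vmax qmin qmax z (q - qOf A z)
  have hnn : 0 ≤ (q - qOf A z) ⬝ᵥ A *ᵥ (q - qOf A z) := by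
    simpa using hA.posSemidef.dotProduct_mulVec_nonneg (q - qOf A z)
  rw [add_sub_cancel] at h
  linarith

theorem dualFun_eq_lagrangian {N : ℕ} {A : Matrix (Fin N) (Fin N) ℝ} (hA : A.PosDef)
    (d vmin vmax qmin qmax : Fin N → ℝ) (z : Fin 4 → Fin N → ℝ) :
    dualFun A d vmin vmax qmin qmax z = lagrangian A d vmin vmax qmin qmax z (qOf A z) := by
  have h := lagrangian_qOf_le hA d vmin vmax qmin qmax z
  exact le_antisymm (ciInf_le ⟨_, Set.forall_mem_range.2 h⟩ (qOf A z)) (le_ciInf h)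

theorem continuous_dualFun {N : ℕ} {A : Matrix (Fin N) (Fin N) ℝ} (hA : A.PosDef)
    (d vmin vmax qmin qmax : Fin N → ℝ) : Continuous (dualFun A d vmin vmax qmin qmax) := by
  rw [funext (dualFun_eq_lagrangian hA d vmin vmax qmin qmax)]
  have hb : ∀ b, Continuous fun z : Fin 4 → Fin N → ℝ => z b := continuous_apply
  have hq : Continuous (qOf A) :=
    ((hb 0).sub (hb 1)).add (continuous_const.matrix_mulVec ((hb 2).sub (hb 3)))
  have hAq : Continuous fun z => A *ᵥ qOf A z := continuous_const.matrix_mulVec hq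
  have hv : Continuous fun z => volt A d (qOf A z) := hAq.add continuous_const
  exact ((((continuous_const.mul (hq.dotProduct hAq)).add
    ((hb 0).dotProduct (continuous_const.sub hv))).add
    ((hb 1).dotProduct (hv.sub continuous_const))).add
    ((hb 2).dotProduct (continuous_const.sub hq))).add
    ((hb 3).dotProduct (hq.sub continuous_const))

/-- Under strict feasibility, the superlevel sets of the dual function are compact. -/
theorem isCompact_dualFun_superlevel {N : ℕ} {A : Matrix (Fin N) (Fin N) ℝ} (hA : A.PosDef)
    (d vmin vmax qmin qmax : Fin N → ℝ)
    (hstrict : ∃ q : Fin N → ℝ, (∀ i, qmin i < q i ∧ q i < qmax i) ∧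
      ∀ i, vmin i < volt A d q i ∧ volt A d q i < vmax i) (t : ℝ) :
    IsCompact ({z : Fin 4 → Fin N → ℝ | ∀ b i, 0 ≤ z b i} ∩
      {z | t ≤ dualFun A d vmin vmax qmin qmax z}) := by
  obtain ⟨q, hq, hv⟩ := hstrict
  let s : Fin 4 → Fin N → ℝ := ![volt A d q - vmin, vmax - volt A d q, q - qmin, qmax - q]
  let c : ℝ := (1 / 2) * (q ⬝ᵥ A *ᵥ q)
  have hs : ∀ b i, 0 < s b i := fun b i => by
    fin_cases b <;> simp [s, hq i, hv i]
  have hL : ∀ z, lagrangian A d vmin vmax qmin qmax z q = c - ∑ b, ∑ i, z b i * s b i := by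
    intro z
    have h : ∑ b, ∑ i, z b i * s b i = z 0 ⬝ᵥ (volt A d q - vmin) + z 1 ⬝ᵥ (vmax - volt A d q)
        + z 2 ⬝ᵥ (q - qmin) + z 3 ⬝ᵥ (qmax - q) := by
      rw [Fin.sum_univ_four]
      rfl
    rw [h]
    simp only [lagrangian, c, dotProduct_sub]
    ring
  refine (isCompact_Icc (a := (0 : Fin 4 → Fin N → ℝ))
    (b := fun b i => (c - t) / s b i)).of_isClosed_subset ?_ ?_
  · refine IsClosed.inter ?_ (isClosed_le continuous_const (continuous_dualFun hA ..))
    simp only [Set.ofPred_forall]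
    exact isClosed_iInter fun b => isClosed_iInter fun i =>
      isClosed_le continuous_const (continuous_apply_apply b i)
  · rintro z ⟨hz, ht⟩
    refine ⟨hz, fun b i => (le_div_iff₀ (hs b i)).2 ?_⟩
    have hnn : ∀ b i, 0 ≤ z b i * s b i := fun b i => mul_nonneg (hz b i) (hs b i).le
    have hle : z b i * s b i ≤ ∑ b, ∑ i, z b i * s b i :=
      (Finset.single_le_sum (f := fun i => z b i * s b i) (fun i _ => hnn b i)
        (Finset.mem_univ i)).trans
      (Finset.single_le_sum (f := fun b => ∑ i, z b i * s b i)
        (fun b _ => Finset.sum_nonneg fun i _ => hnn b i) (Finset.mem_univ b))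
    have h := lagrangian_qOf_le hA d vmin vmax qmin qmax z q
    rw [← dualFun_eq_lagrangian hA, hL] at h
    have ht' : t ≤ dualFun A d vmin vmax qmin qmax z := ht
    linarith

/-- A continuous function with compact superlevel sets in `S` attains its maximum on `S`, and its
near-maximizers are close to maximizers, closeness being measured by any `g` that is continuous
in its first argument and vanishes on the diagonal. -/
theorem exists_near_maximizer_of_isCompact_superlevel {E : Type*} [TopologicalSpace E]
    {S : Set E} (hS : S.Nonempty) {f : E → ℝ} (hf : Continuous f)
    (hK : ∀ t, IsCompact (S ∩ {z | t ≤ f z}))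
    {g : E → E → ℝ} (hg : ∀ w, Continuous fun z => g z w) (hg0 : ∀ z, g z z = 0)
    {ε : ℝ} (hε : 0 < ε) :
    ∃ η : ℝ, 0 < η ∧ ∀ z ∈ S, sSup (f '' S) - f z ≤ η →
      ∃ w ∈ S, (∀ u ∈ S, f u ≤ f w) ∧ g z w < ε := by
  obtain ⟨z₀, hz₀⟩ := hS
  obtain ⟨m, ⟨hmS, hm₀⟩, hm⟩ := (hK (f z₀)).exists_isMaxOn ⟨z₀, hz₀, le_refl (f z₀)⟩ hf.continuousOn
  have hmax : ∀ u ∈ S, f u ≤ f m := fun u hu => by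
    rcases le_total (f z₀) (f u) with h | h
    · exact hm ⟨hu, h⟩
    · exact h.trans hm₀
  have hsup : sSup (f '' S) = f m :=
    IsGreatest.csSup_eq ⟨⟨m, hmS, rfl⟩, Set.forall_mem_image.2 hmax⟩
  rw [hsup]
  let F : Set E := ⋂ w ∈ {w | w ∈ S ∧ ∀ u ∈ S, f u ≤ f w}, {z | ε ≤ g z w}
  have hF : IsClosed F :=
    isClosed_biInter fun w _ => isClosed_le continuous_const (hg w)
  have hnear : ∀ z, z ∉ F → ∃ w ∈ S, (∀ u ∈ S, f u ≤ f w) ∧ g z w < ε := fun z hz => by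
    simpa [F, and_assoc] using hz
  rcases (S ∩ {z | f m - 1 ≤ f z} ∩ F).eq_empty_or_nonempty with he | hne
  · refine ⟨1, one_pos, fun z hz h => hnear z fun hzF => ?_⟩
    exact he.subset ⟨⟨hz, show f m - 1 ≤ f z by linarith⟩, hzF⟩
  · obtain ⟨p, ⟨⟨hpS, -⟩, hpF⟩, hp⟩ :=
      ((hK (f m - 1)).inter_right hF).exists_isMaxOn hne hf.continuousOn
    have hlt : f p < f m := by
      by_contra! hle
      have : ε ≤ g p p := Set.mem_iInter₂.1 hpF p ⟨hpS, fun u hu => (hmax u hu).trans hle⟩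
      rw [hg0] at this
      linarith
    refine ⟨min 1 ((f m - f p) / 2), lt_min one_pos (by linarith), fun z hz h =>
      hnear z fun hzF => ?_⟩
    have h₁ := h.trans (min_le_left _ _)
    have h₂ := h.trans (min_le_right _ _)
    have : f z ≤ f p := hp ⟨⟨hz, show f m - 1 ≤ f z by linarith⟩, hzF⟩
    linarith

/-- Lemma 6: under strict feasibility (so the set Z* of dual maximizers is nonempty and
bounded), for every ε > 0 there is η > 0 such that every z ∈ ℝ₊^{4N} with
D* − D(z) ≤ η satisfies dist(z, Z*) ≤ ε (Euclidean distance from z to Z*). -/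
theorem stmt_16 (N : ℕ) (hN : 0 < N) (A : Matrix (Fin N) (Fin N) ℝ) (hA : A.PosDef)
    (d vmin vmax qmin qmax : Fin N → ℝ)
    (hv : ∀ i, vmin i ≤ vmax i) (hq : ∀ i, qmin i ≤ qmax i)
    (hstrict : ∃ q : Fin N → ℝ, (∀ i, qmin i < q i ∧ q i < qmax i) ∧
      ∀ i, vmin i < volt A d q i ∧ volt A d q i < vmax i) :
    ∀ ε : ℝ, 0 < ε → ∃ η : ℝ, 0 < η ∧
      ∀ z : Fin 4 → Fin N → ℝ, (∀ b i, 0 ≤ z b i) →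
        sSup (dualFun A d vmin vmax qmin qmax '' {w | ∀ b i, 0 ≤ w b i})
            - dualFun A d vmin vmax qmin qmax z ≤ η →
        sInf ((fun w : Fin 4 → Fin N → ℝ => enorm4 (fun b i => z b i - w b i)) ''
            {w : Fin 4 → Fin N → ℝ | (∀ b i, 0 ≤ w b i) ∧
              ∀ u : Fin 4 → Fin N → ℝ, (∀ b i, 0 ≤ u b i) →
                dualFun A d vmin vmax qmin qmax u ≤ dualFun A d vmin vmax qmin qmax w})
          ≤ ε := by
  intro ε hε
  obtain ⟨η, hη, h⟩ := exists_near_maximizer_of_isCompact_superlevel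
    (S := {z : Fin 4 → Fin N → ℝ | ∀ b i, 0 ≤ z b i}) ⟨0, fun _ _ => le_rfl⟩
    (continuous_dualFun hA d vmin vmax qmin qmax)
    (isCompact_dualFun_superlevel hA d vmin vmax qmin qmax hstrict)
    (g := fun z w => enorm4 fun b i => z b i - w b i)
    (fun w => by unfold enorm4; fun_prop) (fun z => by simp [enorm4]) hε
  refine ⟨η, hη, fun z hz hzη => ?_⟩
  obtain ⟨w, hw, hwmax, hlt⟩ := h z hz hzη
  refine le_trans (csInf_le ⟨0, ?_⟩ (Set.mem_image_of_mem _ ⟨hw, hwmax⟩)) hlt.le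
  rintro _ ⟨u, -, rfl⟩
  exact Real.sqrt_nonneg _

end
end
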